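/- arXiv:2210.14459 — 2 statements merged into one kernel-verified Lean document; each statement's English description precedes it below -/
import Mathlib

section
/- Suppose the regularity assumption, the detectability assumption, and the initial stabilizing bound V_r⁰ ≤ ᾱ_V∘σ (with ᾱ_V of class K∞) hold. Then there exists a class-KL function β, independent of i, such that for every i ≥ 0, every x ∈ ℝ^n, every solution φ^i of the closed-loop difference inclusion x(k+1) ∈ f(x(k), H_r^{*,i}(x(k))) with φ^i(0) = x, and every k ≥ 0: σ(φ^i(k)) ≤ β(σ(x), k). -/
/-!
Everything rests on two facts.

Value functions. By induction on `i`, the function `V_r^i` is lower semicontinuous, is bounded by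
`ᾱ_V ∘ σ`, and satisfies `ℓ(x,u) + V_r^i(f(x,u)) ≤ V_r^i(x)` for some `u ∈ H_r^i(x)`, with
`H_r^i(x) ⊆ U(x)` (`VR_invariants`). An unregularized improved policy costs at most `V_r^i`, by
telescoping, which gives `V_r^{i+1} ≤ V_r^i`. The graph of `H_r^{i+1}` is the closure of the graph
of `H^{i+1}`, on which `ℓ ≤ ᾱ_V ∘ σ`; with level-boundedness, `H_r^{i+1}` has closed graph and is
locally bounded. For such a map the infimum of the costs over stationary selections is the
increasing limit of the finite-horizon optimal costs (`selValue_eq_iSup`). Each of these is lower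
semicontinuous by parametric minimization, hence so is the limit, and compactness of the values of
the map allows the minimum and the limit to be exchanged, which yields the Bellman inequality.
Elements of `H_r^{*,i}(x)` are minimizers, so they satisfy that inequality too.

Comparison. Along a trajectory, `V_r^i`, `W`, `σ` and `ℓ` satisfy scalar inequalities not
involving `i` (`Dissip`). These give an overshoot bound `σ(φ(k)) ≤ γ(σ(x))`
(`Dissip.le_stabGain`) and, through the decrease of a weighted sum of `W` and `V_r^i`, a bound
`A(σ(x)) B(δ)` on the time needed to reach `σ ≤ δ` (`Dissip.settling`). Optimizing over `δ`
turns the two into a single class-KL estimate (`exists_classKL`).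
-/

open scoped NNReal ENNReal Topology

noncomputable section

/-- A class-K∞ function on `ℝ≥0 ≃ [0,∞)`. -/
def ClassKInf (α : ℝ≥0 → ℝ≥0) : Prop :=
  Continuous α ∧ StrictMono α ∧ α 0 = 0 ∧ ∀ M : ℝ≥0, ∃ s : ℝ≥0, M ≤ α s

/-- A class-KL function on `[0,∞) × [0,∞)`. -/
def ClassKL (β : ℝ≥0 → ℝ≥0 → ℝ≥0) : Prop :=
  (∀ t, Continuous fun s => β s t) ∧ (∀ t, Monotone fun s => β s t) ∧
    (∀ t, β 0 t = 0) ∧ (∀ s, Antitone fun t => β s t) ∧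
    (∀ s, Filter.Tendsto (fun t => β s t) Filter.atTop (nhds 0))

variable {n m : ℕ}

/-- Closed-loop solution of `x(k+1) = f(x(k), h(x(k)))` from `x`. -/
def phiCL (f : (Fin n → ℝ) → (Fin m → ℝ) → Fin n → ℝ)
    (h : (Fin n → ℝ) → Fin m → ℝ) (x : Fin n → ℝ) : ℕ → Fin n → ℝ
  | 0 => x
  | k + 1 => f (phiCL f h x k) (h (phiCL f h x k))

/-- Infinite-horizon closed-loop cost `J(x,h)`, valued in `[0,∞]`. -/
def Jcost (f : (Fin n → ℝ) → (Fin m → ℝ) → Fin n → ℝ)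
    (ℓ : (Fin n → ℝ) → (Fin m → ℝ) → ℝ≥0)
    (x : Fin n → ℝ) (h : (Fin n → ℝ) → Fin m → ℝ) : ℝ≥0∞ :=
  ∑' k : ℕ, (ℓ (phiCL f h x k) (h (phiCL f h x k)) : ℝ≥0∞)

/-- Improvement step: minimizers of `u ↦ ℓ(x,u) + V(f(x,u))` over `U(x)`. -/
def Himp (f : (Fin n → ℝ) → (Fin m → ℝ) → Fin n → ℝ)
    (ℓ : (Fin n → ℝ) → (Fin m → ℝ) → ℝ≥0)
    (Uset : (Fin n → ℝ) → Set (Fin m → ℝ))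
    (V : (Fin n → ℝ) → ℝ≥0∞) (x : Fin n → ℝ) : Set (Fin m → ℝ) :=
  {u ∈ Uset x | ∀ u' ∈ Uset x,
    (ℓ x u : ℝ≥0∞) + V (f x u) ≤ (ℓ x u' : ℝ≥0∞) + V (f x u')}

/-- Outer semicontinuous regularization of a set-valued map:
`H_r(x) = ⋂_{δ>0} closure(∪_{|y-x|≤δ} H(y))`. -/
def Hreg (H : (Fin n → ℝ) → Set (Fin m → ℝ)) (x : Fin n → ℝ) : Set (Fin m → ℝ) :=
  ⋂ (δ : ℝ) (_ : 0 < δ), closure (⋃ y ∈ Metric.closedBall x δ, H y)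

/-- The PI⁺ value functions: `V_r⁰ = J(·,h⁰)` and `V_r^{i+1}(x)` is the
infimum in `[0,∞]` of `J(x,h)` over all selections `h` of
`H_r^{i+1} = Hreg (Himp V_r^i)`. -/
def VR (f : (Fin n → ℝ) → (Fin m → ℝ) → Fin n → ℝ)
    (ℓ : (Fin n → ℝ) → (Fin m → ℝ) → ℝ≥0)
    (Uset : (Fin n → ℝ) → Set (Fin m → ℝ))
    (h0 : (Fin n → ℝ) → Fin m → ℝ) : ℕ → (Fin n → ℝ) → ℝ≥0∞
  | 0 => fun x => Jcost f ℓ x h0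
  | i + 1 => fun x =>
      ⨅ (h : (Fin n → ℝ) → Fin m → ℝ)
        (_ : ∀ z, h z ∈ Hreg (Himp f ℓ Uset (VR f ℓ Uset h0 i)) z),
        Jcost f ℓ x h

/-- The PI⁺ improvement maps `Hⁱ` (with `H⁰(x) = {h⁰(x)}`). -/
def HseqPI (f : (Fin n → ℝ) → (Fin m → ℝ) → Fin n → ℝ)
    (ℓ : (Fin n → ℝ) → (Fin m → ℝ) → ℝ≥0)
    (Uset : (Fin n → ℝ) → Set (Fin m → ℝ))
    (h0 : (Fin n → ℝ) → Fin m → ℝ) : ℕ → (Fin n → ℝ) → Set (Fin m → ℝ)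
  | 0 => fun x => {h0 x}
  | i + 1 => Himp f ℓ Uset (VR f ℓ Uset h0 i)

/-- The PI⁺ regularized maps `H_rⁱ` (with `H_r⁰(x) = {h⁰(x)}`). -/
def HrseqPI (f : (Fin n → ℝ) → (Fin m → ℝ) → Fin n → ℝ)
    (ℓ : (Fin n → ℝ) → (Fin m → ℝ) → ℝ≥0)
    (Uset : (Fin n → ℝ) → Set (Fin m → ℝ))
    (h0 : (Fin n → ℝ) → Fin m → ℝ) : ℕ → (Fin n → ℝ) → Set (Fin m → ℝ)
  | 0 => fun x => {h0 x}
  | i + 1 => Hreg (Himp f ℓ Uset (VR f ℓ Uset h0 i))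

/-- The PI⁺ selected maps `H_r^{*,i}`: minimizers of
`u ↦ ℓ(x,u) + V_r^i(f(x,u))` over `H_r^i(x)` (with `H_r^{*,0}(x) = {h⁰(x)}`). -/
def HstarPI (f : (Fin n → ℝ) → (Fin m → ℝ) → Fin n → ℝ)
    (ℓ : (Fin n → ℝ) → (Fin m → ℝ) → ℝ≥0)
    (Uset : (Fin n → ℝ) → Set (Fin m → ℝ))
    (h0 : (Fin n → ℝ) → Fin m → ℝ) : ℕ → (Fin n → ℝ) → Set (Fin m → ℝ)
  | 0 => fun x => {h0 x}
  | i + 1 => fun x =>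
      {u ∈ HrseqPI f ℓ Uset h0 (i + 1) x |
        ∀ u' ∈ HrseqPI f ℓ Uset h0 (i + 1) x,
          (ℓ x u : ℝ≥0∞) + VR f ℓ Uset h0 (i + 1) (f x u)
            ≤ (ℓ x u' : ℝ≥0∞) + VR f ℓ Uset h0 (i + 1) (f x u')}

/-! ### Sequences obeying the dissipation inequalities -/

/-- The scalar inequalities satisfied along a closed-loop trajectory, for `s = σ(φ(k))`,
`v = V(φ(k))`, `w = W(φ(k))` and `l = ℓ(φ(k), u(k))`. -/
structure Dissip (alphaW chiW alphaWbar alphaV : ℝ≥0 → ℝ≥0) (s v w l : ℕ → ℝ≥0) : Prop where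
  cost : ∀ k, l k + v (k + 1) ≤ v k
  v_le : ∀ k, v k ≤ alphaV (s k)
  w_le : ∀ k, w k ≤ alphaWbar (s k)
  detect : ∀ k, w (k + 1) + alphaW (s k) ≤ w k + chiW (l k)

lemma Dissip.shift {alphaW chiW alphaWbar alphaV : ℝ≥0 → ℝ≥0} {s v w l : ℕ → ℝ≥0}
    (h : Dissip alphaW chiW alphaWbar alphaV s v w l) (j : ℕ) :
    Dissip alphaW chiW alphaWbar alphaV (fun k => s (j + k)) (fun k => v (j + k))
      (fun k => w (j + k)) (fun k => l (j + k)) where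
  cost k := h.cost (j + k)
  v_le k := h.v_le (j + k)
  w_le k := h.w_le (j + k)
  detect k := h.detect (j + k)

lemma Dissip.v_antitone {alphaW chiW alphaWbar alphaV : ℝ≥0 → ℝ≥0} {s v w l : ℕ → ℝ≥0}
    (h : Dissip alphaW chiW alphaWbar alphaV s v w l) : Antitone v :=
  antitone_nat_of_succ_le fun k => le_trans le_add_self (h.cost k)

lemma Dissip.l_le {alphaW chiW alphaWbar alphaV : ℝ≥0 → ℝ≥0} {s v w l : ℕ → ℝ≥0}
    (h : Dissip alphaW chiW alphaWbar alphaV s v w l) (k : ℕ) : l k ≤ alphaV (s 0) :=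
  ((le_self_add.trans (h.cost k)).trans (h.v_antitone (Nat.zero_le k))).trans (h.v_le 0)

lemma ClassKInf.exists_orderIso {α : ℝ≥0 → ℝ≥0} (h : ClassKInf α) :
    ∃ e : ℝ≥0 ≃o ℝ≥0, ∀ x, e x = α x := by
  obtain ⟨hc, hm, h0, hu⟩ := h
  have hsurj : Function.Surjective α := by
    intro y
    obtain ⟨s, hs⟩ := hu y
    obtain ⟨x, -, hx⟩ := intermediate_value_Icc (zero_le (a := s)) hc.continuousOn
      (show y ∈ Set.Icc (α 0) (α s) from ⟨by simp [h0], hs⟩)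
    exact ⟨x, hx⟩
  exact ⟨hm.orderIsoOfSurjective α hsurj, fun x => rfl⟩

/-- The uniform overshoot bound: `σ(φ(k)) ≤ stabGain (σ(φ(0)))`. Here `e` plays the role of
the order isomorphism of `[0,∞)` given by `α_W`. -/
def stabGain (e : ℝ≥0 ≃o ℝ≥0) (chiW alphaWbar alphaV : ℝ≥0 → ℝ≥0) (r : ℝ≥0) : ℝ≥0 :=
  e.symm (max (alphaWbar r) (alphaWbar (e.symm (chiW (alphaV r))) + chiW (alphaV r))
    + chiW (alphaV r))

lemma Dissip.le_stabGain {alphaW chiW alphaWbar alphaV : ℝ≥0 → ℝ≥0} {s v w l : ℕ → ℝ≥0}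
    (h : Dissip alphaW chiW alphaWbar alphaV s v w l) (hchi : Monotone chiW)
    (hbar : Monotone alphaWbar) (e : ℝ≥0 ≃o ℝ≥0) (he : ∀ x, e x = alphaW x) (k : ℕ) :
    s k ≤ stabGain e chiW alphaWbar alphaV (s 0) := by
  have hl : ∀ k, chiW (l k) ≤ chiW (alphaV (s 0)) := fun k => hchi (h.l_le k)
  -- If `s k` is large, detectability makes `w` decrease; otherwise `w (k + 1)` is small anyway.
  have hw : ∀ k, w k ≤ max (alphaWbar (s 0))
      (alphaWbar (e.symm (chiW (alphaV (s 0)))) + chiW (alphaV (s 0))) := by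
    intro k
    induction k with
    | zero => exact le_max_of_le_left (h.w_le 0)
    | succ k ih =>
      have hd := h.detect k
      rcases le_total (chiW (alphaV (s 0))) (alphaW (s k)) with hc | hc
      · refine le_trans ?_ ih
        have h1 : w (k + 1) + alphaW (s k) ≤ w k + alphaW (s k) :=
          hd.trans (by gcongr; exact (hl k).trans hc)
        exact le_of_add_le_add_right h1
      · refine le_max_of_le_right ?_
        have h1 : s k ≤ e.symm (chiW (alphaV (s 0))) := by
          rw [e.le_symm_apply, he]; exact hc
        calc w (k + 1) ≤ w k + chiW (l k) := le_self_add.trans hd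
          _ ≤ _ := add_le_add ((h.w_le k).trans (hbar h1)) (hl k)
  unfold stabGain
  rw [e.le_symm_apply, he]
  exact (le_add_self.trans (h.detect k)).trans (add_le_add (hw k) (hl k))

/-- The settling-time estimate. While `s ≥ δ`, the quantity `w + C v` with
`C = (χ_W(ᾱ_V(s 0)) + d) / η` drops by at least `d` at each step, where `2 d ≤ α_W(δ)` and
`χ_W(η) = d`: a step with `l ≥ η` is paid for by the decrease of `v`, any other step by the
detectability inequality. -/
lemma Dissip.settling {alphaW chiW alphaWbar alphaV : ℝ≥0 → ℝ≥0} {s v w l : ℕ → ℝ≥0}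
    (h : Dissip alphaW chiW alphaWbar alphaV s v w l) (hchi : StrictMono chiW)
    (hW : Monotone alphaW) {δ d η : ℝ≥0} (hη : 0 < η)
    (hd2 : 2 * d ≤ alphaW δ) (hdη : chiW η = d) (N : ℕ) (hN : ∀ k < N, δ ≤ s k) :
    N * d ≤ alphaWbar (s 0) + (chiW (alphaV (s 0)) + d) / η * alphaV (s 0) := by
  set M := chiW (alphaV (s 0)) with hM
  set C := (M + d) / η with hC
  have hCη : C * η = M + d := div_mul_cancel₀ _ hη.ne'
  have key : ∀ j ≤ N, j * d + (w j + C * v j) ≤ w 0 + C * v 0 := by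
    intro j
    induction j with
    | zero => intro _; simp
    | succ j ih =>
      intro hj
      refine le_trans ?_ (ih (by omega))
      have hdet := h.detect j
      have hcost := h.cost j
      have hs : 2 * d ≤ alphaW (s j) := hd2.trans (hW (hN j (by omega)))
      have hstep : d + (w (j + 1) + C * v (j + 1)) ≤ w j + C * v j := by
        rw [← NNReal.coe_le_coe] at hdet hcost hs ⊢
        rw [← NNReal.coe_inj] at hCη
        push_cast at hdet hcost hs hCη ⊢
        have hC0 : (0 : ℝ) ≤ C := C.2
        have hcost' : (C : ℝ) * (l j + v (j + 1)) ≤ C * v j :=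
          mul_le_mul_of_nonneg_left hcost hC0
        rcases le_total η (l j) with hl | hl
        · have h1 : (chiW (l j) : ℝ) ≤ M := by
            exact_mod_cast hchi.monotone (h.l_le j)
          have h2 : (C : ℝ) * η ≤ C * l j :=
            mul_le_mul_of_nonneg_left (by exact_mod_cast hl) hC0
          have h3 : (0 : ℝ) ≤ d := d.2
          linarith
        · have h1 : (chiW (l j) : ℝ) ≤ d := by
            have := hchi.monotone hl
            rw [hdη] at this
            exact_mod_cast this
          have h2 : (0 : ℝ) ≤ C * l j := mul_nonneg hC0 (l j).2
          linarith
      calc ((j + 1 : ℕ) : ℝ≥0) * d + (w (j + 1) + C * v (j + 1))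
          = j * d + (d + (w (j + 1) + C * v (j + 1))) := by push_cast; ring
        _ ≤ _ := by gcongr
  calc (N : ℝ≥0) * d ≤ N * d + (w N + C * v N) := le_self_add
    _ ≤ w 0 + C * v 0 := key N le_rfl
    _ ≤ _ := add_le_add (h.w_le 0) (by gcongr; exact h.v_le 0)

/-- A function of time decaying to zero, obtained by optimizing the tolerance `δ` against the
settling-time factor `B δ`. The extra summand makes the infimum strictly exceeded, so that some
`δ` realizes the bound. -/
def decay (γ B : ℝ≥0 → ℝ≥0) (t : ℝ≥0) : ℝ≥0 :=
  (⨅ δ : Set.Ioi (0 : ℝ≥0), (γ δ + B δ / (t + 1))) + 1 / (t + 1)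

lemma decay_antitone (γ B : ℝ≥0 → ℝ≥0) : Antitone (decay γ B) := by
  intro t t' htt
  unfold decay
  refine add_le_add (ciInf_mono (OrderBot.bddBelow _) fun δ => ?_) ?_ <;> gcongr

lemma exists_le_decay (γ B : ℝ≥0 → ℝ≥0) (t : ℝ≥0) :
    ∃ δ, 0 < δ ∧ γ δ + B δ / (t + 1) ≤ decay γ B t := by
  have : Nonempty (Set.Ioi (0 : ℝ≥0)) := ⟨⟨1, Set.mem_Ioi.2 one_pos⟩⟩
  have hlt : (⨅ δ : Set.Ioi (0 : ℝ≥0), (γ δ + B δ / (t + 1))) < decay γ B t :=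
    lt_add_of_pos_right _ (by positivity)
  obtain ⟨δ, hδ⟩ := exists_lt_of_ciInf_lt hlt
  exact ⟨δ, δ.2, hδ.le⟩

lemma tendsto_decay {γ : ℝ≥0 → ℝ≥0} (hγ : Continuous γ) (hγ0 : γ 0 = 0) (B : ℝ≥0 → ℝ≥0) :
    Filter.Tendsto (decay γ B) Filter.atTop (𝓝 0) := by
  rw [tendsto_order]
  refine ⟨fun a ha => absurd ha not_lt_zero, fun ε hε => ?_⟩
  have h1 : ∀ᶠ δ in 𝓝[>] (0 : ℝ≥0), γ δ < ε := by
    have := (hγ.tendsto 0).mono_left (nhdsWithin_le_nhds (s := Set.Ioi (0 : ℝ≥0)))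
    rw [hγ0] at this
    exact this.eventually_lt_const hε
  obtain ⟨δ, hδ, hδ0⟩ := (h1.and self_mem_nhdsWithin).exists
  have hT : Filter.Tendsto (fun t : ℝ≥0 => t + 1) Filter.atTop Filter.atTop :=
    Filter.tendsto_atTop_mono (fun _ => le_self_add) Filter.tendsto_id
  have hdiv : ∀ a : ℝ≥0, Filter.Tendsto (fun t : ℝ≥0 => a / (t + 1)) Filter.atTop (𝓝 0) := by
    intro a
    have h := (tendsto_inv_atTop_zero.comp hT).const_mul a
    simpa [div_eq_mul_inv] using h
  have hlim : Filter.Tendsto (fun t : ℝ≥0 => (γ δ + B δ / (t + 1)) + 1 / (t + 1))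
      Filter.atTop (𝓝 (γ δ)) := by
    simpa using ((hdiv (B δ)).const_add (γ δ)).add (hdiv 1)
  filter_upwards [hlim.eventually_lt_const hδ] with t ht
  refine lt_of_le_of_lt (add_le_add ?_ le_rfl) ht
  exact ciInf_le (f := fun δ : Set.Ioi (0 : ℝ≥0) => γ δ + B δ / (t + 1))
    (OrderBot.bddBelow _) ⟨δ, hδ0⟩

/-- The comparison principle: the dissipation inequalities alone, with the comparison
functions fixed, force a common class-KL bound on `s`, namely
`min (γ r) (p t + γ r * A r * p t)` with `p = decay γ B`. If `s` has reached the nearly optimal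
level `δ` by time `t`, the term `p t` suffices; otherwise `1 ≤ A r * B δ / (t + 1)`. -/
lemma exists_classKL {alphaW chiW alphaWbar alphaV : ℝ≥0 → ℝ≥0}
    (hW : ClassKInf alphaW) (hchi : ClassKInf chiW) (hbar_cont : Continuous alphaWbar)
    (hbar_mono : Monotone alphaWbar) (hbar_zero : alphaWbar 0 = 0) (hV : ClassKInf alphaV) :
    ∃ β : ℝ≥0 → ℝ≥0 → ℝ≥0, ClassKL β ∧
      ∀ s v w l : ℕ → ℝ≥0, Dissip alphaW chiW alphaWbar alphaV s v w l →
        ∀ k : ℕ, s k ≤ β (s 0) k := by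
  obtain ⟨e, he⟩ := hW.exists_orderIso
  obtain ⟨c, hc⟩ := hchi.exists_orderIso
  have hVm := hV.2.1.monotone
  have hchim := hchi.2.1.monotone
  set γ : ℝ≥0 → ℝ≥0 := stabGain e chiW alphaWbar alphaV with hγdef
  have hγc : Continuous γ := by
    have h1 := hV.1
    have h2 := hchi.1
    have h3 := e.symm.continuous
    unfold γ stabGain
    fun_prop
  have hγm : Monotone γ := by
    intro a b hab
    have h1 : chiW (alphaV a) ≤ chiW (alphaV b) := hchim (hVm hab)
    exact e.symm.monotone (add_le_add (max_le_max (hbar_mono hab)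
      (add_le_add (hbar_mono (e.symm.monotone h1)) h1)) h1)
  have hγ0 : γ 0 = 0 := by
    have : e.symm 0 = 0 := e.symm.map_bot
    simp [γ, stabGain, hV.2.2.1, hchi.2.2.1, hbar_zero, this]
  -- The settling time to level `δ` from level `r` is at most `A r * B δ`, by expanding
  -- `N ≤ (alphaWbar r + (chiW (alphaV r) + d) / η * alphaV r) / d`.
  let dd : ℝ≥0 → ℝ≥0 := fun δ => alphaW δ / 2
  let ηη : ℝ≥0 → ℝ≥0 := fun δ => c.symm (dd δ)
  let A : ℝ≥0 → ℝ≥0 := fun r => alphaWbar r + chiW (alphaV r) * alphaV r + alphaV r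
  let B : ℝ≥0 → ℝ≥0 := fun δ => 1 / dd δ + 1 / (ηη δ * dd δ) + 1 / ηη δ
  have hAc : Continuous A := by
    have h1 := hV.1
    have h2 := hchi.1
    unfold A
    fun_prop
  have hAm : Monotone A := by
    intro a b hab
    have h1 := hVm hab
    have h2 := hchim h1
    have h3 := hbar_mono hab
    unfold A
    gcongr
  have hsettle : ∀ s v w l : ℕ → ℝ≥0, Dissip alphaW chiW alphaWbar alphaV s v w l →
      ∀ δ, 0 < δ → ∀ N : ℕ, (∀ k < N, δ ≤ s k) → (N : ℝ≥0) ≤ A (s 0) * B δ := by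
    intro s v w l h δ hδ N hN
    have hWδ : 0 < alphaW δ := by
      have := hW.2.1 hδ
      rwa [hW.2.2.1] at this
    have hd : 0 < dd δ := by
      change 0 < alphaW δ / 2
      positivity
    have hη : 0 < ηη δ := by
      have h0 : c.symm 0 = 0 := c.symm.map_bot
      have := c.symm.strictMono hd
      rwa [h0] at this
    have hset := h.settling hchi.2.1 hW.2.1.monotone (d := dd δ) (η := ηη δ) hη
      (le_of_eq (by simp only [dd]; field_simp))
      (by rw [← hc]; exact c.apply_symm_apply _) N hN
    change (N : ℝ≥0) ≤ A (s 0) * (1 / dd δ + 1 / (ηη δ * dd δ) + 1 / ηη δ)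
    calc (N : ℝ≥0)
        ≤ (alphaWbar (s 0) + (chiW (alphaV (s 0)) + dd δ) / ηη δ * alphaV (s 0)) / dd δ :=
          (le_div_iff₀ hd).2 hset
      _ = alphaWbar (s 0) * (1 / dd δ)
          + chiW (alphaV (s 0)) * alphaV (s 0) * (1 / (ηη δ * dd δ))
          + alphaV (s 0) * (1 / ηη δ) := by
        field_simp
        ring
      _ ≤ A (s 0) * (1 / dd δ) + A (s 0) * (1 / (ηη δ * dd δ)) + A (s 0) * (1 / ηη δ) := by
        gcongr
        · exact le_add_right le_self_add
        · exact le_add_right le_add_self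
        · exact le_add_self
      _ = _ := by ring
  refine ⟨fun s t => min (γ s) (decay γ B t + γ s * A s * decay γ B t),
    ⟨fun t => ?_, fun t => ?_, fun t => ?_, fun s => ?_, fun s => ?_⟩, ?_⟩
  · fun_prop
  · intro a b hab
    have h1 := hγm hab
    have h2 := hAm hab
    dsimp only
    gcongr
  · simp [hγ0]
  · intro a b hab
    have h1 := decay_antitone γ B hab
    dsimp only
    gcongr
  · have hp := tendsto_decay hγc hγ0 B
    have h1 := hp.add (hp.const_mul (γ s * A s))
    have h2 := (tendsto_const_nhds (x := γ s)).min h1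
    simpa using h2
  · intro s v w l h k
    have hg : s k ≤ γ (s 0) := h.le_stabGain hchim hbar_mono e he k
    refine le_min hg ?_
    obtain ⟨δ, hδ, hδp⟩ := exists_le_decay γ B k
    by_cases hall : ∀ j < k + 1, δ ≤ s j
    · have hN := hsettle s v w l h δ hδ (k + 1) hall
      have hk : (0 : ℝ≥0) < k + 1 := by positivity
      have h1 : 1 ≤ A (s 0) * (B δ / (k + 1)) := by
        rw [← mul_div_assoc, one_le_div hk]
        exact_mod_cast hN
      refine le_trans ?_ le_add_self
      calc s k ≤ γ (s 0) * 1 := by simpa using hg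
        _ ≤ γ (s 0) * (A (s 0) * (B δ / (k + 1))) := by gcongr
        _ ≤ γ (s 0) * (A (s 0) * decay γ B k) := by
          gcongr
          exact le_add_self.trans hδp
        _ = _ := by ring
    · push Not at hall
      obtain ⟨j, hjk, hj⟩ := hall
      refine le_trans ?_ le_self_add
      have h1 := (h.shift j).le_stabGain hchim hbar_mono e he (k - j)
      have h2 : j + (k - j) = k := by omega
      simp only [h2, add_zero] at h1
      exact (h1.trans (hγm hj.le)).trans (le_self_add.trans hδp)

/-! ### Parametric minimization over compact-valued maps -/

/-- Local boundedness of a set-valued map, phrased with compact bounds. -/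
def LocBdd {X Y : Type*} [TopologicalSpace X] [TopologicalSpace Y] (G : X → Set Y) : Prop :=
  ∀ x, ∃ S ∈ 𝓝 x, ∃ K : Set Y, IsCompact K ∧ ∀ z ∈ S, G z ⊆ K

/-- A set-valued map with closed graph which is locally bounded. -/
structure Tame {X Y : Type*} [TopologicalSpace X] [TopologicalSpace Y] (G : X → Set Y) :
    Prop where
  closed : IsClosed {p : X × Y | p.2 ∈ G p.1}
  bdd : LocBdd G

section Minimization

variable {X Y : Type*} [TopologicalSpace X] [TopologicalSpace Y]

/-- The projection of the graph to `X` is closed: inputs chosen along an ultrafilter converging to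
`x` stay in a compact set, and their limit belongs to `A x`. -/
lemma isClosed_domain {A : X → Set Y} (hA : Tame A) : IsClosed {x | (A x).Nonempty} := by
  rw [← closure_subset_iff_isClosed]
  intro x hx
  obtain ⟨F, hF, hFx⟩ := mem_closure_iff_ultrafilter.1 hx
  obtain ⟨S, hS, K, hK, hSK⟩ := hA.bdd x
  have hne : Nonempty Y := by
    obtain ⟨z, y, -⟩ := F.nonempty_of_mem hF
    exact ⟨y⟩
  let u : X → Y := fun z => Classical.epsilon fun y => y ∈ A z
  have hu : ∀ z ∈ {x | (A x).Nonempty}, u z ∈ A z := fun z hz => Classical.epsilon_spec hz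
  have hKF : K ∈ F.map u := by
    rw [Ultrafilter.mem_map]
    filter_upwards [hF, hFx hS] with z hz hzS using hSK z hzS (hu z hz)
  obtain ⟨y, -, hy⟩ := hK.ultrafilter_le_nhds' _ hKF
  have hlim : Filter.Tendsto (fun z => (z, u z)) (F : Filter X) (𝓝 (x, y)) := by
    rw [nhds_prod_eq]
    exact Filter.Tendsto.prodMk hFx hy
  have := hA.closed.mem_of_tendsto hlim (by filter_upwards [hF] with z hz using hu z hz)
  exact ⟨y, this⟩

lemma Tame.sublevel {G : X → Set Y} (hG : Tame G) {g : X × Y → ℝ≥0∞}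
    (hg : LowerSemicontinuous g) (c : ℝ≥0∞) : Tame fun x => {u ∈ G x | g (x, u) ≤ c} where
  closed := hG.closed.inter (hg.isClosed_preimage c)
  bdd x := by
    obtain ⟨S, hS, K, hK, hSK⟩ := hG.bdd x
    exact ⟨S, hS, K, hK, fun z hz u hu => hSK z hz hu.1⟩

lemma Tame.isClosed_apply {G : X → Set Y} (hG : Tame G) (x : X) : IsClosed (G x) :=
  hG.closed.preimage (Continuous.prodMk_right x)

lemma Tame.isCompact_apply {G : X → Set Y} (hG : Tame G) (x : X) : IsCompact (G x) := by
  obtain ⟨S, hS, K, hK, hSK⟩ := hG.bdd x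
  exact hK.of_isClosed_subset (hG.isClosed_apply x) (hSK x (mem_of_mem_nhds hS))

lemma Tame.exists_min {G : X → Set Y} (hG : Tame G) (hne : ∀ x, (G x).Nonempty)
    {g : X × Y → ℝ≥0∞} (hg : LowerSemicontinuous g) (x : X) :
    ∃ u ∈ G x, ∀ u' ∈ G x, g (x, u) ≤ g (x, u') := by
  have hgx : LowerSemicontinuous fun u => g (x, u) :=
    hg.comp (Continuous.prodMk_right x)
  obtain ⟨u, hu, hmin⟩ := LowerSemicontinuousOn.exists_isMinOn (hne x) (hG.isCompact_apply x)
    (hgx.lowerSemicontinuousOn _)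
  exact ⟨u, hu, fun u' hu' => hmin hu'⟩

lemma Tame.exists_eq_iInf {G : X → Set Y} (hG : Tame G) (hne : ∀ x, (G x).Nonempty)
    {g : X × Y → ℝ≥0∞} (hg : LowerSemicontinuous g) (x : X) :
    ∃ u ∈ G x, g (x, u) = ⨅ u' ∈ G x, g (x, u') := by
  obtain ⟨u, hu, hmin⟩ := hG.exists_min hne hg x
  exact ⟨u, hu, le_antisymm (le_iInf₂ hmin) (iInf₂_le u hu)⟩

lemma Tame.lowerSemicontinuous_iInf {G : X → Set Y} (hG : Tame G) (hne : ∀ x, (G x).Nonempty)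
    {g : X × Y → ℝ≥0∞} (hg : LowerSemicontinuous g) :
    LowerSemicontinuous fun x => ⨅ u ∈ G x, g (x, u) := by
  rw [lowerSemicontinuous_iff_isClosed_preimage]
  intro c
  convert isClosed_domain (hG.sublevel hg c) using 1
  ext x
  constructor
  · intro hx
    obtain ⟨u, hu, h⟩ := hG.exists_eq_iInf hne hg x
    exact ⟨u, hu, h.trans_le hx⟩
  · rintro ⟨u, hu, h⟩
    exact le_trans (iInf₂_le (f := fun u (_ : u ∈ G x) => g (x, u)) u hu) h

end Minimization

/-! ### Optimal costs over the selections of a set-valued map -/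

lemma phiCL_succ (f : (Fin n → ℝ) → (Fin m → ℝ) → Fin n → ℝ)
    (h : (Fin n → ℝ) → Fin m → ℝ) (x : Fin n → ℝ) (k : ℕ) :
    phiCL f h x (k + 1) = phiCL f h (f x (h x)) k := by
  induction k with
  | zero => rfl
  | succ k ih =>
    rw [phiCL, ih, phiCL]

lemma Jcost_eq (f : (Fin n → ℝ) → (Fin m → ℝ) → Fin n → ℝ)
    (ℓ : (Fin n → ℝ) → (Fin m → ℝ) → ℝ≥0)
    (x : Fin n → ℝ) (h : (Fin n → ℝ) → Fin m → ℝ) :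
    Jcost f ℓ x h = ℓ x (h x) + Jcost f ℓ (f x (h x)) h := by
  unfold Jcost
  rw [tsum_eq_zero_add' ENNReal.summable]
  simp only [phiCL_succ]
  rfl

/-- A policy along which `V` dissipates the stage cost has total cost at most `V`. -/
lemma Jcost_le (f : (Fin n → ℝ) → (Fin m → ℝ) → Fin n → ℝ)
    (ℓ : (Fin n → ℝ) → (Fin m → ℝ) → ℝ≥0) (h : (Fin n → ℝ) → Fin m → ℝ)
    (V : (Fin n → ℝ) → ℝ≥0∞)
    (hV : ∀ x, (ℓ x (h x) : ℝ≥0∞) + V (f x (h x)) ≤ V x) (x : Fin n → ℝ) :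
    Jcost f ℓ x h ≤ V x := by
  refine ENNReal.tsum_le_of_sum_range_le fun N => ?_
  suffices H : ∑ k ∈ Finset.range N, (ℓ (phiCL f h x k) (h (phiCL f h x k)) : ℝ≥0∞)
      + V (phiCL f h x N) ≤ V x from le_self_add.trans H
  induction N with
  | zero => simp [phiCL]
  | succ N ih =>
    rw [Finset.sum_range_succ, add_assoc]
    refine le_trans ?_ ih
    gcongr
    exact hV _

/-- Optimal `N`-step cost, with zero terminal cost, over inputs constrained to `G`. -/
def finValue (f : (Fin n → ℝ) → (Fin m → ℝ) → Fin n → ℝ)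
    (ℓ : (Fin n → ℝ) → (Fin m → ℝ) → ℝ≥0)
    (G : (Fin n → ℝ) → Set (Fin m → ℝ)) : ℕ → (Fin n → ℝ) → ℝ≥0∞
  | 0 => fun _ => 0
  | N + 1 => fun x => ⨅ u ∈ G x, ((ℓ x u : ℝ≥0∞) + finValue f ℓ G N (f x u))

/-- Infimal infinite-horizon cost over the stationary policies selected from `G`. -/
def selValue (f : (Fin n → ℝ) → (Fin m → ℝ) → Fin n → ℝ)
    (ℓ : (Fin n → ℝ) → (Fin m → ℝ) → ℝ≥0)
    (G : (Fin n → ℝ) → Set (Fin m → ℝ)) (x : Fin n → ℝ) : ℝ≥0∞ :=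
  ⨅ (h : (Fin n → ℝ) → Fin m → ℝ) (_ : ∀ z, h z ∈ G z), Jcost f ℓ x h

section Values

variable {f : (Fin n → ℝ) → (Fin m → ℝ) → Fin n → ℝ}
  {ℓ : (Fin n → ℝ) → (Fin m → ℝ) → ℝ≥0} {G : (Fin n → ℝ) → Set (Fin m → ℝ)}

lemma finValue_le_succ (N : ℕ) (x : Fin n → ℝ) :
    finValue f ℓ G N x ≤ finValue f ℓ G (N + 1) x := by
  induction N generalizing x with
  | zero => exact zero_le
  | succ N ih =>
    refine iInf₂_mono fun u _ => ?_
    gcongr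
    exact ih _

lemma finValue_le_Jcost {h : (Fin n → ℝ) → Fin m → ℝ} (hh : ∀ z, h z ∈ G z) (N : ℕ)
    (x : Fin n → ℝ) : finValue f ℓ G N x ≤ Jcost f ℓ x h := by
  induction N generalizing x with
  | zero => exact zero_le
  | succ N ih =>
    rw [Jcost_eq]
    refine (iInf₂_le (h x) (hh x)).trans ?_
    gcongr
    exact ih _

lemma lsc_stage (hf : Continuous fun p : (Fin n → ℝ) × (Fin m → ℝ) => f p.1 p.2)
    (hl : Continuous fun p : (Fin n → ℝ) × (Fin m → ℝ) => ℓ p.1 p.2)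
    {V : (Fin n → ℝ) → ℝ≥0∞} (hV : LowerSemicontinuous V) :
    LowerSemicontinuous fun p : (Fin n → ℝ) × (Fin m → ℝ) =>
      (ℓ p.1 p.2 : ℝ≥0∞) + V (f p.1 p.2) :=
  (ENNReal.continuous_coe.comp hl).lowerSemicontinuous.add (hV.comp hf)

lemma lsc_finValue (hf : Continuous fun p : (Fin n → ℝ) × (Fin m → ℝ) => f p.1 p.2)
    (hl : Continuous fun p : (Fin n → ℝ) × (Fin m → ℝ) => ℓ p.1 p.2)
    (hG : Tame G) (hne : ∀ x, (G x).Nonempty) (N : ℕ) :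
    LowerSemicontinuous (finValue f ℓ G N) := by
  induction N with
  | zero => exact lowerSemicontinuous_const
  | succ N ih => exact hG.lowerSemicontinuous_iInf hne (lsc_stage hf hl ih)

/-- Compactness of `G x` lets the minimum be exchanged with the limit of the horizon. -/
lemma exists_bellman_iSup (hf : Continuous fun p : (Fin n → ℝ) × (Fin m → ℝ) => f p.1 p.2)
    (hl : Continuous fun p : (Fin n → ℝ) × (Fin m → ℝ) => ℓ p.1 p.2)
    (hG : Tame G) (hne : ∀ x, (G x).Nonempty) (x : Fin n → ℝ) :
    ∃ u ∈ G x, (ℓ x u : ℝ≥0∞) + ⨆ N, finValue f ℓ G N (f x u) ≤ ⨆ N, finValue f ℓ G N x := by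
  set c := ⨆ N, finValue f ℓ G N x with hc
  have hT : ∀ N, Tame fun x => {u ∈ G x | (ℓ x u : ℝ≥0∞) + finValue f ℓ G N (f x u) ≤ c} :=
    fun N => hG.sublevel (lsc_stage hf hl (lsc_finValue hf hl hG hne N)) c
  obtain ⟨u, hu⟩ := IsCompact.nonempty_iInter_of_sequence_nonempty_isCompact_isClosed
    (fun N => {u ∈ G x | (ℓ x u : ℝ≥0∞) + finValue f ℓ G N (f x u) ≤ c})
    (fun N u hu => ⟨hu.1, le_trans (by gcongr; exact finValue_le_succ N _) hu.2⟩)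
    (fun N => by
      obtain ⟨u, hu, h⟩ := hG.exists_eq_iInf hne
        (lsc_stage hf hl (lsc_finValue hf hl hG hne N)) x
      exact ⟨u, hu, h.trans_le (le_iSup (fun N => finValue f ℓ G N x) (N + 1))⟩)
    ((hT 0).isCompact_apply x) (fun N => (hT N).isClosed_apply x)
  rw [Set.mem_iInter] at hu
  refine ⟨u, (hu 0).1, ?_⟩
  rw [ENNReal.add_iSup]
  exact iSup_le fun N => (hu N).2

/-- The infimum over stationary selections is the limit of the finite-horizon optimal costs:
a selection of Bellman minimizers of the limit attains it. -/
lemma selValue_eq_iSup (hf : Continuous fun p : (Fin n → ℝ) × (Fin m → ℝ) => f p.1 p.2)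
    (hl : Continuous fun p : (Fin n → ℝ) × (Fin m → ℝ) => ℓ p.1 p.2)
    (hG : Tame G) (hne : ∀ x, (G x).Nonempty) :
    selValue f ℓ G = fun x => ⨆ N, finValue f ℓ G N x := by
  choose h hh hB using exists_bellman_iSup hf hl hG hne
  funext x
  refine le_antisymm ?_ (iSup_le fun N => le_iInf₂ fun h hh => finValue_le_Jcost hh N x)
  exact (iInf₂_le h hh).trans (Jcost_le f ℓ h _ hB x)

lemma lsc_selValue (hf : Continuous fun p : (Fin n → ℝ) × (Fin m → ℝ) => f p.1 p.2)
    (hl : Continuous fun p : (Fin n → ℝ) × (Fin m → ℝ) => ℓ p.1 p.2)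
    (hG : Tame G) (hne : ∀ x, (G x).Nonempty) : LowerSemicontinuous (selValue f ℓ G) := by
  rw [selValue_eq_iSup hf hl hG hne]
  exact lowerSemicontinuous_iSup fun N => lsc_finValue hf hl hG hne N

lemma exists_bellman_selValue
    (hf : Continuous fun p : (Fin n → ℝ) × (Fin m → ℝ) => f p.1 p.2)
    (hl : Continuous fun p : (Fin n → ℝ) × (Fin m → ℝ) => ℓ p.1 p.2)
    (hG : Tame G) (hne : ∀ x, (G x).Nonempty) (x : Fin n → ℝ) :
    ∃ u ∈ G x, (ℓ x u : ℝ≥0∞) + selValue f ℓ G (f x u) ≤ selValue f ℓ G x := by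
  rw [selValue_eq_iSup hf hl hG hne]
  exact exists_bellman_iSup hf hl hG hne x

end Values

/-! ### The regularized policy improvement step -/

/-- The graph of the regularization is the closure of the graph. -/
lemma graph_Hreg (H : (Fin n → ℝ) → Set (Fin m → ℝ)) :
    {p : (Fin n → ℝ) × (Fin m → ℝ) | p.2 ∈ Hreg H p.1} = closure {p | p.2 ∈ H p.1} := by
  ext ⟨x, u⟩
  simp only [Set.mem_ofPred_eq, Hreg, Set.mem_iInter, Metric.mem_closure_iff]
  constructor
  · intro h ε hε
    obtain ⟨u', hu', hd⟩ := h (ε / 2) (half_pos hε) ε hε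
    simp only [Set.mem_iUnion] at hu'
    obtain ⟨y, hy, huy⟩ := hu'
    refine ⟨(y, u'), huy, ?_⟩
    rw [Prod.dist_eq, max_lt_iff]
    refine ⟨?_, hd⟩
    rw [Metric.mem_closedBall, dist_comm] at hy
    exact hy.trans_lt (half_lt_self hε)
  · intro h δ hδ ε hε
    obtain ⟨⟨y, u'⟩, huy, hd⟩ := h (min δ ε) (lt_min hδ hε)
    rw [Prod.dist_eq, max_lt_iff, lt_min_iff, lt_min_iff] at hd
    refine ⟨u', ?_, hd.2.2⟩
    simp only [Set.mem_iUnion]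
    refine ⟨y, ?_, huy⟩
    rw [Metric.mem_closedBall, dist_comm]
    exact hd.1.1.le

lemma subset_Hreg (H : (Fin n → ℝ) → Set (Fin m → ℝ)) (x : Fin n → ℝ) : H x ⊆ Hreg H x := by
  intro u hu
  have : (x, u) ∈ {p : (Fin n → ℝ) × (Fin m → ℝ) | p.2 ∈ Hreg H p.1} := by
    rw [graph_Hreg]
    exact subset_closure hu
  exact this

section Improvement

variable {f : (Fin n → ℝ) → (Fin m → ℝ) → Fin n → ℝ}
  {ℓ : (Fin n → ℝ) → (Fin m → ℝ) → ℝ≥0} {Uset : (Fin n → ℝ) → Set (Fin m → ℝ)}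

/-- Admissible inputs whose stage cost is below a continuous bound `b` form a tame map. -/
lemma tame_stage_le (hl : Continuous fun p : (Fin n → ℝ) × (Fin m → ℝ) => ℓ p.1 p.2)
    (hlb : ∀ (x : Fin n → ℝ) (a : ℝ), ∃ S ∈ 𝓝 x, ∃ B : Set (Fin m → ℝ),
      Bornology.IsBounded B ∧ ∀ z ∈ S, {u : Fin m → ℝ | (ℓ z u : ℝ) ≤ a} ⊆ B)
    (hUgraph : IsClosed {p : (Fin n → ℝ) × (Fin m → ℝ) | p.2 ∈ Uset p.1})
    {b : (Fin n → ℝ) → ℝ≥0} (hb : Continuous b) :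
    Tame fun x => {u ∈ Uset x | ℓ x u ≤ b x} where
  closed := hUgraph.inter (isClosed_le (f := fun p : (Fin n → ℝ) × (Fin m → ℝ) => ℓ p.1 p.2)
    (g := fun p => b p.1) hl (hb.comp continuous_fst))
  bdd x := by
    obtain ⟨S, hS, B, hB, hSB⟩ := hlb x (b x + 1)
    have hev : ∀ᶠ z in 𝓝 x, b z < b x + 1 :=
      (hb.tendsto x).eventually_lt_const (lt_add_one _)
    refine ⟨S ∩ {z | b z < b x + 1}, Filter.inter_mem hS hev, closure B,
      hB.isCompact_closure, fun z hz u hu => subset_closure (hSB z hz.1 ?_)⟩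
    have : ℓ z u ≤ b x + 1 := hu.2.trans hz.2.le
    exact_mod_cast this

lemma Himp_nonempty (hUne : ∀ x, (Uset x).Nonempty)
    (hf : Continuous fun p : (Fin n → ℝ) × (Fin m → ℝ) => f p.1 p.2)
    (hl : Continuous fun p : (Fin n → ℝ) × (Fin m → ℝ) => ℓ p.1 p.2)
    (hlb : ∀ (x : Fin n → ℝ) (a : ℝ), ∃ S ∈ 𝓝 x, ∃ B : Set (Fin m → ℝ),
      Bornology.IsBounded B ∧ ∀ z ∈ S, {u : Fin m → ℝ | (ℓ z u : ℝ) ≤ a} ⊆ B)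
    (hUgraph : IsClosed {p : (Fin n → ℝ) × (Fin m → ℝ) | p.2 ∈ Uset p.1})
    {V : (Fin n → ℝ) → ℝ≥0∞} (hV : LowerSemicontinuous V) (hfin : ∀ x, V x ≠ ∞)
    (x : Fin n → ℝ) : (Himp f ℓ Uset V x).Nonempty := by
  obtain ⟨u₁, hu₁⟩ := hUne x
  -- Inputs whose stage cost exceeds the total cost of `u₁` are never better than `u₁`.
  set c : ℝ≥0 := ℓ x u₁ + (V (f x u₁)).toNNReal with hc
  have hcE : (c : ℝ≥0∞) = ℓ x u₁ + V (f x u₁) := by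
    rw [hc, ENNReal.coe_add, ENNReal.coe_toNNReal (hfin _)]
  have hT := tame_stage_le hl hlb hUgraph (b := fun _ => c) continuous_const
  have hgx : LowerSemicontinuous fun u => (ℓ x u : ℝ≥0∞) + V (f x u) :=
    (lsc_stage hf hl hV).comp (Continuous.prodMk_right x)
  have hu₁' : u₁ ∈ {u ∈ Uset x | ℓ x u ≤ c} := ⟨hu₁, le_self_add⟩
  obtain ⟨u, hu, hmin⟩ := LowerSemicontinuousOn.exists_isMinOn ⟨u₁, hu₁'⟩
    (hT.isCompact_apply x) (hgx.lowerSemicontinuousOn _)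
  refine ⟨u, hu.1, fun u' hu' => ?_⟩
  by_cases h : ℓ x u' ≤ c
  · exact hmin ⟨hu', h⟩
  · have h1 : (c : ℝ≥0∞) ≤ ℓ x u' := by exact_mod_cast (not_le.1 h).le
    exact (hmin hu₁').trans (hcE.ge.trans (h1.trans le_self_add))

/-- If `V` satisfies a Bellman inequality over admissible inputs and is bounded by a continuous
`b`, every improved input has stage cost at most `b`, and so does every regularized one. -/
lemma Hreg_subset (hl : Continuous fun p : (Fin n → ℝ) × (Fin m → ℝ) => ℓ p.1 p.2)
    (hUgraph : IsClosed {p : (Fin n → ℝ) × (Fin m → ℝ) | p.2 ∈ Uset p.1})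
    {V : (Fin n → ℝ) → ℝ≥0∞} {b : (Fin n → ℝ) → ℝ≥0} (hb : Continuous b)
    (hVb : ∀ x, V x ≤ b x)
    (hbell : ∀ x, ∃ u ∈ Uset x, (ℓ x u : ℝ≥0∞) + V (f x u) ≤ V x) (x : Fin n → ℝ) :
    Hreg (Himp f ℓ Uset V) x ⊆ {u ∈ Uset x | ℓ x u ≤ b x} := by
  have hcl : IsClosed {p : (Fin n → ℝ) × (Fin m → ℝ) | p.2 ∈ Uset p.1 ∧ ℓ p.1 p.2 ≤ b p.1} :=
    hUgraph.inter (isClosed_le (f := fun p : (Fin n → ℝ) × (Fin m → ℝ) => ℓ p.1 p.2)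
    (g := fun p => b p.1) hl (hb.comp continuous_fst))
  have hsub : {p : (Fin n → ℝ) × (Fin m → ℝ) | p.2 ∈ Himp f ℓ Uset V p.1} ⊆
      {p | p.2 ∈ Uset p.1 ∧ ℓ p.1 p.2 ≤ b p.1} := by
    rintro ⟨z, u⟩ ⟨huU, humin⟩
    obtain ⟨u', hu', h⟩ := hbell z
    have h1 : (ℓ z u : ℝ≥0∞) ≤ b z :=
      le_self_add.trans (((humin u' hu').trans h).trans (hVb z))
    exact ⟨huU, by exact_mod_cast h1⟩
  have hsub' := closure_minimal hsub hcl
  rw [← graph_Hreg] at hsub'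
  exact fun u hu => hsub' (show (x, u) ∈ _ from hu)

end Improvement

lemma HrseqPI_zero (f : (Fin n → ℝ) → (Fin m → ℝ) → Fin n → ℝ)
    (ℓ : (Fin n → ℝ) → (Fin m → ℝ) → ℝ≥0) (Uset : (Fin n → ℝ) → Set (Fin m → ℝ))
    (h0 : (Fin n → ℝ) → Fin m → ℝ) (x : Fin n → ℝ) :
    HrseqPI f ℓ Uset h0 0 x = {h0 x} := rfl

lemma VR_succ (f : (Fin n → ℝ) → (Fin m → ℝ) → Fin n → ℝ)
    (ℓ : (Fin n → ℝ) → (Fin m → ℝ) → ℝ≥0) (Uset : (Fin n → ℝ) → Set (Fin m → ℝ))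
    (h0 : (Fin n → ℝ) → Fin m → ℝ) (i : ℕ) :
    VR f ℓ Uset h0 (i + 1) = selValue f ℓ (HrseqPI f ℓ Uset h0 (i + 1)) := rfl

/-- The invariants of the recursion: each value function is lower semicontinuous, is bounded by
the same `b`, and satisfies the Bellman inequality over the regularized improvement map,
all of whose values are admissible. -/
lemma VR_invariants
    (f : (Fin n → ℝ) → (Fin m → ℝ) → Fin n → ℝ)
    (ℓ : (Fin n → ℝ) → (Fin m → ℝ) → ℝ≥0)
    (Uset : (Fin n → ℝ) → Set (Fin m → ℝ))
    (hUne : ∀ x, (Uset x).Nonempty)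
    (h0 : (Fin n → ℝ) → Fin m → ℝ) (h0adm : ∀ x, h0 x ∈ Uset x)
    (hf : Continuous fun p : (Fin n → ℝ) × (Fin m → ℝ) => f p.1 p.2)
    (hl : Continuous fun p : (Fin n → ℝ) × (Fin m → ℝ) => ℓ p.1 p.2)
    (hlb : ∀ (x : Fin n → ℝ) (a : ℝ), ∃ S ∈ 𝓝 x, ∃ B : Set (Fin m → ℝ),
      Bornology.IsBounded B ∧ ∀ z ∈ S, {u : Fin m → ℝ | (ℓ z u : ℝ) ≤ a} ⊆ B)
    (hUgraph : IsClosed {p : (Fin n → ℝ) × (Fin m → ℝ) | p.2 ∈ Uset p.1})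
    (hV0lsc : LowerSemicontinuous fun x => Jcost f ℓ x h0)
    {b : (Fin n → ℝ) → ℝ≥0} (hb : Continuous b)
    (hV0 : ∀ x, Jcost f ℓ x h0 ≤ (b x : ℝ≥0∞)) (i : ℕ) :
    LowerSemicontinuous (VR f ℓ Uset h0 i) ∧ (∀ x, VR f ℓ Uset h0 i x ≤ b x) ∧
      (∀ x, HrseqPI f ℓ Uset h0 i x ⊆ Uset x) ∧
      ∀ x, ∃ u ∈ HrseqPI f ℓ Uset h0 i x,
        (ℓ x u : ℝ≥0∞) + VR f ℓ Uset h0 i (f x u) ≤ VR f ℓ Uset h0 i x := by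
  induction i with
  | zero =>
    refine ⟨hV0lsc, hV0, fun x => ?_, fun x => ⟨h0 x, rfl, (Jcost_eq f ℓ x h0).ge⟩⟩
    rw [HrseqPI_zero, Set.singleton_subset_iff]
    exact h0adm x
  | succ i ih =>
    obtain ⟨hlsc, hle, hadm, hbell⟩ := ih
    set V := VR f ℓ Uset h0 i with hVdef
    have hbell' : ∀ x, ∃ u ∈ Uset x, (ℓ x u : ℝ≥0∞) + V (f x u) ≤ V x := fun x =>
      let ⟨u, hu, h⟩ := hbell x
      ⟨u, hadm x hu, h⟩
    have hHne : ∀ x, (Himp f ℓ Uset V x).Nonempty := Himp_nonempty hUne hf hl hlb hUgraph hlsc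
      fun x => ((hle x).trans_lt ENNReal.coe_lt_top).ne
    have hsub := Hreg_subset hl hUgraph hb hle hbell'
    have hG : Tame (Hreg (Himp f ℓ Uset V)) := by
      refine ⟨by rw [graph_Hreg]; exact isClosed_closure, fun x => ?_⟩
      obtain ⟨S, hS, K, hK, hSK⟩ := (tame_stage_le hl hlb hUgraph hb).bdd x
      exact ⟨S, hS, K, hK, fun z hz => (hsub z).trans (hSK z hz)⟩
    have hne : ∀ x, (Hreg (Himp f ℓ Uset V) x).Nonempty := fun x =>
      (hHne x).mono (subset_Hreg _ x)
    have hH : HrseqPI f ℓ Uset h0 (i + 1) = Hreg (Himp f ℓ Uset V) := rfl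
    rw [VR_succ, hH]
    refine ⟨lsc_selValue hf hl hG hne, fun x => ?_, fun x u hu => (hsub x hu).1,
      exists_bellman_selValue hf hl hG hne⟩
    -- An unregularized improved policy is also a selection of the regularized map, and `V`
    -- dissipates the stage cost along it.
    choose h hh using hHne
    refine ((iInf₂_le h fun z => subset_Hreg _ z (hh z)).trans ?_).trans (hle x)
    refine Jcost_le f ℓ h V (fun z => ?_) x
    obtain ⟨u, hu, hle'⟩ := hbell' z
    exact ((hh z).2 u hu).trans hle'

/-- recursive stability of PI⁺: a single class-KL `β` bounds
`σ` along every solution of `x(k+1) ∈ f(x(k), H_r^{*,i}(x(k)))`. -/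
theorem piplus_recursive_stability
    (f : (Fin n → ℝ) → (Fin m → ℝ) → Fin n → ℝ)
    (ℓ : (Fin n → ℝ) → (Fin m → ℝ) → ℝ≥0)
    (Uset : (Fin n → ℝ) → Set (Fin m → ℝ))
    (hUne : ∀ x, (Uset x).Nonempty)
    (σ : (Fin n → ℝ) → ℝ≥0) (hσ : Continuous σ)
    -- initial admissible policy
    (h0 : (Fin n → ℝ) → Fin m → ℝ) (h0adm : ∀ x, h0 x ∈ Uset x)
    -- regularity assumption
    (hf : Continuous fun p : (Fin n → ℝ) × (Fin m → ℝ) => f p.1 p.2)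
    (hl : Continuous fun p : (Fin n → ℝ) × (Fin m → ℝ) => ℓ p.1 p.2)
    (hlb : ∀ (x : Fin n → ℝ) (a : ℝ), ∃ S ∈ 𝓝 x, ∃ B : Set (Fin m → ℝ),
      Bornology.IsBounded B ∧ ∀ z ∈ S, {u : Fin m → ℝ | (ℓ z u : ℝ) ≤ a} ⊆ B)
    (hUgraph : IsClosed {p : (Fin n → ℝ) × (Fin m → ℝ) | p.2 ∈ Uset p.1})
    (hV0lsc : LowerSemicontinuous fun x => Jcost f ℓ x h0)
    (hsublevel : ∀ Δ : ℝ≥0, 0 < Δ → IsCompact {x : Fin n → ℝ | σ x ≤ Δ})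
    -- detectability assumption
    (W : (Fin n → ℝ) → ℝ≥0) (hWcont : Continuous W)
    (alphaW chiW : ℝ≥0 → ℝ≥0) (halphaW : ClassKInf alphaW) (hchiW : ClassKInf chiW)
    (alphaWbar : ℝ≥0 → ℝ≥0) (halphaWbar_cont : Continuous alphaWbar)
    (halphaWbar_mono : Monotone alphaWbar) (halphaWbar_zero : alphaWbar 0 = 0)
    (hdet1 : ∀ x, W x ≤ alphaWbar (σ x))
    (hdet2 : ∀ x, ∀ u ∈ Uset x, W (f x u) + alphaW (σ x) ≤ W x + chiW (ℓ x u))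
    -- initial stabilizing bound `V_r⁰ ≤ ᾱ_V ∘ σ`
    (alphaV : ℝ≥0 → ℝ≥0) (halphaV : ClassKInf alphaV)
    (hV0 : ∀ x, Jcost f ℓ x h0 ≤ (alphaV (σ x) : ℝ≥0∞))
    :
    ∃ β : ℝ≥0 → ℝ≥0 → ℝ≥0, ClassKL β ∧
      ∀ (i : ℕ) (x : Fin n → ℝ) (φ : ℕ → Fin n → ℝ),
        φ 0 = x →
        (∀ k : ℕ, ∃ u ∈ HstarPI f ℓ Uset h0 i (φ k), φ (k + 1) = f (φ k) u) →
        ∀ k : ℕ, σ (φ k) ≤ β (σ x) (k : ℝ≥0) := by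
  obtain ⟨β, hβ, hbound⟩ := exists_classKL halphaW hchiW halphaWbar_cont halphaWbar_mono
    halphaWbar_zero halphaV
  refine ⟨β, hβ, fun i x φ hφ0 hφ k => ?_⟩
  obtain ⟨-, hle, hadm, hbell⟩ := VR_invariants f ℓ Uset hUne h0 h0adm hf hl hlb hUgraph hV0lsc
    (b := fun x => alphaV (σ x)) (halphaV.1.comp hσ) hV0 i
  -- Minimizers over `H_r^i` inherit the Bellman inequality.
  have hstar : ∀ z, ∀ u ∈ HstarPI f ℓ Uset h0 i z, u ∈ Uset z ∧
      (ℓ z u : ℝ≥0∞) + VR f ℓ Uset h0 i (f z u) ≤ VR f ℓ Uset h0 i z := by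
    intro z u hu
    obtain ⟨u', hu', h⟩ := hbell z
    cases i with
    | zero =>
      rw [HrseqPI_zero, Set.mem_singleton_iff] at hu'
      rw [HstarPI, Set.mem_singleton_iff] at hu
      subst hu hu'
      exact ⟨h0adm z, h⟩
    | succ i => exact ⟨hadm z hu.1, (hu.2 u' hu').trans h⟩
  have hfin : ∀ z, ((VR f ℓ Uset h0 i z).toNNReal : ℝ≥0∞) = VR f ℓ Uset h0 i z := fun z =>
    ENNReal.coe_toNNReal ((hle z).trans_lt ENNReal.coe_lt_top).ne
  choose u hu hstep using hφ
  have hdiss : Dissip alphaW chiW alphaWbar alphaV (fun k => σ (φ k))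
      (fun k => (VR f ℓ Uset h0 i (φ k)).toNNReal) (fun k => W (φ k))
      (fun k => ℓ (φ k) (u k)) := by
    refine ⟨fun k => ?_, fun k => ?_, fun k => hdet1 _, fun k => ?_⟩
    · have h := (hstar _ _ (hu k)).2
      rw [← hstep, ← hfin (φ k), ← hfin (φ (k + 1))] at h
      exact_mod_cast h
    · have h := hle (φ k)
      rw [← hfin] at h
      exact_mod_cast h
    · have h := hdet2 _ _ (hstar _ _ (hu k)).1
      rwa [← hstep] at h
  have h := hbound _ _ _ _ hdiss k
  simpa only [hφ0] using h

end
end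

section
/- In the counter-example, the one-step improvement objective at the state x̄ + 1 = 25/7 has no minimizer: the function g : [−1/100, 1] → [0,∞) defined by g(u) = ℓ(x̄+1, u) + V¹(f(x̄+1, u)) does not attain its infimum on [−1/100, 1], and this infimum equals 681/28. -/
/-!
The cost `V¹` has a downward jump at `x̄ = 18/7`: just above `x̄` the policy `h¹` switches from `1` to
`0`, which is cheaper there. Since `f(25/7, u) = (18/7)(1 - u)`, the point `u = 0` lands exactly on the
expensive side of the jump.

* For `u < 0` the successor is `18/7 + t` with `t = -18u/7 > 0`, and
  `g(u) = 681/28 + (19/2) t + (7/4) t²`, which is greater than `681/28` and tends to it as `u ↑ 0`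
  (`gobj_of_neg`).
* For `u ≥ 0` the objective stays strictly above `681/28` (`lt_gobj_of_nonneg`): on `[0, 1/2]` it is
  at least `g(0) = 696/28`, and for `u ≥ 1/2` the stage cost alone is at least `725/28`.

`V¹` is computed through its Bellman equation (`V1_eq`), as the closed loop reaches `0` in at most two
steps from the states that occur.
-/

open scoped NNReal ENNReal Topology

noncomputable section

namespace CounterExample

/-- Dynamics `f(x,u) = (1−u)·max(0, |x|−1)`. -/
def fce (x u : ℝ) : ℝ := (1 - u) * max 0 (|x| - 1)

def g1 (u : ℝ) : ℝ := max (min (2 * (1 - u)) 1) 0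

def g2 (u : ℝ) : ℝ := max (min (2 * u) 1) 0

/-- Stage cost `ℓ(x,u) = 3|x|·g₁(u) + (|x| + (7/4)|x|²)·g₂(u)`. -/
def lce (x u : ℝ) : ℝ := 3 * |x| * g1 u + (|x| + 7 / 4 * |x| ^ 2) * g2 u

/-- The policy `h¹`: `h¹(x) = 1` if `|x| ≤ 18/7`, else `h¹(x) = 0`. -/
def h1 (x : ℝ) : ℝ := if |x| ≤ 18 / 7 then 1 else 0

/-- Closed-loop solution under `h¹` from `x`. -/
def phice (x : ℝ) : ℕ → ℝ
  | 0 => x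
  | k + 1 => fce (phice x k) (h1 (phice x k))

/-- `V¹(x) = J(x,h¹)`, valued in `[0,∞]`. -/
def V1 (x : ℝ) : ℝ≥0∞ :=
  ∑' k : ℕ, ENNReal.ofReal (lce (phice x k) (h1 (phice x k)))

/-- The one-step improvement objective at `x̄ + 1 = 25/7`:
`g(u) = ℓ(25/7, u) + V¹(f(25/7, u))`. -/
def gobj (u : ℝ) : ℝ≥0∞ := ENNReal.ofReal (lce (25 / 7) u) + V1 (fce (25 / 7) u)

/-- Bellman equation for the policy `h¹`. -/
lemma V1_eq (x : ℝ) : V1 x = ENNReal.ofReal (lce x (h1 x)) + V1 (fce x (h1 x)) := by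
  have hshift : ∀ k, phice x (k + 1) = phice (fce x (h1 x)) k := by
    intro k
    induction k with
    | zero => rfl
    | succ k ih =>
      change fce (phice x (k + 1)) (h1 (phice x (k + 1))) = _
      rw [ih]
      rfl
  unfold V1
  rw [tsum_eq_zero_add' ENNReal.summable]
  simp only [hshift]
  rfl

lemma V1_zero : V1 0 = 0 := by
  have h : ∀ k, phice 0 k = 0 := by
    intro k
    induction k with
    | zero => rfl
    | succ k ih =>
      change fce (phice 0 k) (h1 (phice 0 k)) = 0
      rw [ih]
      simp [fce]
  simp [V1, h, lce]

lemma lce_one (x : ℝ) : lce x 1 = |x| + 7 / 4 * |x| ^ 2 := by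
  norm_num [lce, g1, g2]

lemma lce_zero (x : ℝ) : lce x 0 = 3 * |x| := by
  norm_num [lce, g1, g2]

lemma fce_start (u : ℝ) : fce (25 / 7) u = 18 / 7 * (1 - u) := by
  have h : |(25 / 7 : ℝ)| = 25 / 7 := abs_of_pos (by norm_num)
  rw [fce, h, max_eq_right (by norm_num)]
  ring

/-- On `[0, 18/7]` the policy applies `1`, which steers the state to `0` in one step. -/
lemma V1_of_le {x : ℝ} (h0 : 0 ≤ x) (hx : x ≤ 18 / 7) :
    V1 x = ENNReal.ofReal (x + 7 / 4 * x ^ 2) := by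
  have habs : |x| = x := abs_of_nonneg h0
  have hh : h1 x = 1 := by rw [h1, habs, if_pos hx]
  have hf : fce x 1 = 0 := by simp [fce]
  rw [V1_eq, hh, hf, V1_zero, lce_one, habs, add_zero]

/-- On `(18/7, 25/7]` the policy first applies `0`, which moves the state to `x - 1 ≤ 18/7`. -/
lemma V1_of_gt {x : ℝ} (hx : 18 / 7 < x) (hx' : x ≤ 25 / 7) :
    V1 x = ENNReal.ofReal (3 * x + ((x - 1) + 7 / 4 * (x - 1) ^ 2)) := by
  have habs : |x| = x := abs_of_nonneg (by linarith)
  have hh : h1 x = 0 := by rw [h1, habs, if_neg (not_le.mpr hx)]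
  have hf : fce x 0 = x - 1 := by
    rw [fce, habs, max_eq_right (by linarith)]
    ring
  have h1x : 0 ≤ x - 1 := by linarith
  rw [V1_eq, hh, hf, lce_zero, habs, V1_of_le h1x (by linarith),
    ← ENNReal.ofReal_add (by linarith) (by positivity)]

/-- The objective for `u < 0`, in terms of the overshoot `t = -18u/7` past `18/7`. -/
lemma gobj_of_neg {u : ℝ} (hu : -1 / 100 ≤ u) (hu0 : u < 0) :
    gobj u = ENNReal.ofReal
      (681 / 28 + 19 / 2 * (-18 / 7 * u) + 7 / 4 * (-18 / 7 * u) ^ 2) := by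
  have hg1 : g1 u = 1 := by
    rw [g1, min_eq_right (by linarith), max_eq_left (by norm_num)]
  have hg2 : g2 u = 0 := by
    rw [g2, max_eq_right (min_le_of_left_le (by linarith))]
  have hl : lce (25 / 7) u = 75 / 7 := by
    rw [lce, hg1, hg2, abs_of_pos (by norm_num)]
    norm_num
  rw [gobj, hl, fce_start, V1_of_gt (by linarith) (by linarith),
    ← ENNReal.ofReal_add (by norm_num) (by nlinarith [sq_nonneg (18 / 7 * (1 - u) - 1)])]
  congr 1
  ring

lemma lt_gobj_of_nonneg {u : ℝ} (hu0 : 0 ≤ u) (hu1 : u ≤ 1) :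
    ENNReal.ofReal (681 / 28) < gobj u := by
  have hy0 : 0 ≤ 18 / 7 * (1 - u) := by linarith
  have hl : lce (25 / 7) u = 75 / 7 * g1 u + 725 / 28 * g2 u := by
    rw [lce, abs_of_pos (by norm_num)]
    ring
  have hg1 : 0 ≤ g1 u := le_max_right _ _
  have hg2 : 0 ≤ g2 u := le_max_right _ _
  rw [gobj, hl, fce_start, V1_of_le hy0 (by linarith),
    ← ENNReal.ofReal_add (by positivity) (by positivity)]
  have key : 681 / 28 < 75 / 7 * g1 u + 725 / 28 * g2 u
      + (18 / 7 * (1 - u) + 7 / 4 * (18 / 7 * (1 - u)) ^ 2) := by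
    rcases le_total u (1 / 2) with h | h
    · have e1 : g1 u = 1 := by
        rw [g1, min_eq_right (by linarith), max_eq_left (by norm_num)]
      have e2 : g2 u = 2 * u := by
        rw [g2, min_eq_left (by linarith), max_eq_left (by linarith)]
      rw [e1, e2]
      nlinarith [sq_nonneg u]
    · have e2 : g2 u = 1 := by
        rw [g2, min_eq_right (by linarith), max_eq_left (by norm_num)]
      rw [e2]
      nlinarith [sq_nonneg (18 / 7 * (1 - u))]
  exact (ENNReal.ofReal_lt_ofReal_iff (lt_trans (by norm_num) key)).mpr key

lemma lt_gobj {u : ℝ} (hu : u ∈ Set.Icc (-(1 : ℝ) / 100) 1) :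
    ENNReal.ofReal (681 / 28) < gobj u := by
  rcases lt_or_ge u 0 with h | h
  · rw [gobj_of_neg hu.1 h]
    have key : (681 / 28 : ℝ) <
        681 / 28 + 19 / 2 * (-18 / 7 * u) + 7 / 4 * (-18 / 7 * u) ^ 2 := by
      nlinarith [sq_nonneg (-18 / 7 * u)]
    exact (ENNReal.ofReal_lt_ofReal_iff (lt_trans (by norm_num) key)).mpr key
  · exact lt_gobj_of_nonneg h hu.2

/-- `g` does not attain its infimum over `[−1/100, 1]`, and
this infimum equals `681/28`. -/
theorem improvement_objective_has_no_minimizer :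
    sInf (gobj '' Set.Icc (-(1 : ℝ) / 100) 1) = (681 / 28 : ℝ≥0∞) ∧
    ∀ u ∈ Set.Icc (-(1 : ℝ) / 100) 1, gobj u ≠ (681 / 28 : ℝ≥0∞) := by
  have hc : (681 / 28 : ℝ≥0∞) = ENNReal.ofReal (681 / 28) := by
    rw [ENNReal.ofReal_div_of_pos (by norm_num), ENNReal.ofReal_ofNat, ENNReal.ofReal_ofNat]
  rw [hc]
  refine ⟨le_antisymm ?_ ?_, fun u hu => (lt_gobj hu).ne'⟩
  · refine ENNReal.le_of_forall_pos_le_add fun ε hε _ => ?_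
    have hε' : (0 : ℝ) < ε := hε
    -- With `u = -s` and `s ≤ 1/100`, the excess `(19/2) t + (7/4) t²`, `t = 18s/7`, is at most `30 s`.
    obtain ⟨s, hs0, hs1, hs2⟩ : ∃ s : ℝ, 0 < s ∧ s ≤ 1 / 100 ∧ s ≤ ε / 30 :=
      ⟨min (1 / 100) (ε / 30), by positivity, min_le_left _ _, min_le_right _ _⟩
    have hs : -(1 : ℝ) / 100 ≤ -s := by linarith
    refine (sInf_le (Set.mem_image_of_mem gobj (⟨hs, by linarith⟩ :
      -s ∈ Set.Icc (-(1 : ℝ) / 100) 1))).trans ?_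
    rw [gobj_of_neg hs (by linarith), ← ENNReal.ofReal_coe_nnreal,
      ← ENNReal.ofReal_add (by norm_num) hε'.le]
    apply ENNReal.ofReal_le_ofReal
    nlinarith
  · refine le_sInf ?_
    rintro _ ⟨u, hu, rfl⟩
    exact (lt_gobj hu).le

end CounterExample

end
end
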